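/- Let (K,|·|) be a complete normed field, f ∈ K[z] a polynomial of degree n ≥ 2, and 1 ≤ p ≤ ∞ with conjugate exponent q. Suppose the initial guess x⁰ ∈ Kⁿ has pairwise distinct components and satisfies E(x⁰) = ‖W(x⁰)/d(x⁰)‖_p < 1/2^{1/q} and φ(E(x⁰)) ≤ 1, where φ(t) = ((n−1)^{1/q} t / ((1−t)(1−2^{1/q} t))) · (1 + t/((n−1)^{1/p}(1−2^{1/q} t)))^{n−1}. Then: (i) the Weierstrass iteration x^{k+1} = x^k − W(x^k) is well defined (each x^k has pairwise distinct components), satisfies |x^k_i − x⁰_i| ≤ |W_i(x⁰)|/(1 − β(E(x⁰))) for all k and i, and converges to a root-vector ξ of f, where β(t) = t·φ(t)·(1 − 2^{1/q} t)/t = ((n−1)^{1/q} t/(1−t))·(1 + t/((n−1)^{1/p}(1−2^{1/q} t)))^{n−1}; (ii) for all k ≥ 0 and each index i, |x^k_i − ξ_i| ≤ (θ^k λ^{2^k − 1}/(1 − θ λ^{2^k})) · |x¹_i − x⁰_i| and |x^{k+1}_i − x^k_i| ≤ θ^k λ^{2^k − 1} |x¹_i − x⁰_i|, where λ = φ(E(x⁰))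 and θ = 1 − 2^{1/q} E(x⁰); (iii) if φ(E(x⁰)) < 1, then f has n simple zeros in K. -/

import Mathlib

open Finset Filter Topology
open scoped ENNReal

noncomputable def pnorm {n : ℕ} (p : ℝ≥0∞) (v : Fin n → ℝ) : ℝ :=
  if p = ⊤ then ⨆ i, |v i| else (∑ i, |v i| ^ p.toReal) ^ (1 / p.toReal)

noncomputable def epow (a : ℝ) (p : ℝ≥0∞) : ℝ :=
  if p = ⊤ then 1 else a ^ (1 / p.toReal)

noncomputable def dsep {K : Type*} [NormedField K] {n : ℕ} (x : Fin n → K) (i : Fin n) : ℝ :=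
  sInf {r : ℝ | ∃ j, j ≠ i ∧ r = ‖x i - x j‖}

noncomputable def Wcorr {K : Type*} [NormedField K] {n : ℕ} (f : Polynomial K)
    (x : Fin n → K) (i : Fin n) : K :=
  Polynomial.eval (x i) f / (f.leadingCoeff * ∏ j ∈ Finset.univ.erase i, (x i - x j))

def IsRootVector {K : Type*} [NormedField K] {n : ℕ} (f : Polynomial K) (ξ : Fin n → K) : Prop :=
  ∀ z : K, Polynomial.eval z f = f.leadingCoeff * ∏ i, (z - ξ i)

/-!
By Lagrange interpolation, a polynomial of degree `n` can be recovered from its leading coefficient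
and the corrections `W(x)`. Evaluated at the next iterate `T x = x - W(x)`, this factors `W_i(T x)`
as `-W_i(x)` times a sum times a product; Hölder's inequality bounds the sum and the
arithmetic-geometric mean inequality the product, so `|W_i(T x)| ≤ β(E(x)) |W_i(x)|`. The distances
between nodes shrink at most by the factor `θ = 1 - 2^{1/q} E(x)`, whence
`E(T x) ≤ φ(E(x)) E(x)` with `φ(E(x)) = β(E(x)) / θ`. Since `t ↦ φ(t) / t` is increasing,
`φ(E(T x)) ≤ φ(E(x))²`: along the iteration `φ(E)` decays like `λ^{2^k}`, the steps are dominated by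
`θ^k λ^{2^k - 1}` (`λ`, `θ` taken at the initial point), and summing geometric series gives
convergence together with all the error bounds. When `λ < 1`, the limits stay so close to the
initial nodes that no two of them can coincide.
-/

section PNorm

variable {n : ℕ} {p q : ℝ≥0∞}

-- The junk value `1 / (⊤ : ℝ≥0∞).toReal = 0` is what makes this hold at `p = ⊤` too.
lemma epow_eq_rpow (a : ℝ) (p : ℝ≥0∞) : epow a p = a ^ (p⁻¹).toReal := by
  rw [ENNReal.toReal_inv, ← one_div]
  by_cases hp : p = ⊤ <;> simp [epow, hp]

lemma epow_nonneg {a : ℝ} (ha : 0 ≤ a) (p : ℝ≥0∞) : 0 ≤ epow a p := by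
  rw [epow_eq_rpow]
  exact Real.rpow_nonneg ha _

lemma one_le_epow {a : ℝ} (ha : 1 ≤ a) (p : ℝ≥0∞) : 1 ≤ epow a p := by
  rw [epow_eq_rpow]
  exact Real.one_le_rpow ha ENNReal.toReal_nonneg

lemma toReal_inv_add_toReal_inv (p q : ℝ≥0∞) [p.HolderConjugate q] :
    (p⁻¹).toReal + (q⁻¹).toReal = 1 := by
  have hp := ENNReal.inv_ne_top.2 (ENNReal.HolderConjugate.ne_zero p q)
  have hq := ENNReal.inv_ne_top.2 (ENNReal.HolderConjugate.ne_zero q p)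
  rw [← ENNReal.toReal_add hp hq, ENNReal.HolderConjugate.inv_add_inv_eq_one p q,
    ENNReal.toReal_one]

lemma epow_mul_epow [p.HolderConjugate q] {a : ℝ} (ha : 0 ≤ a) : epow a p * epow a q = a := by
  have hsum := toReal_inv_add_toReal_inv p q
  rw [epow_eq_rpow, epow_eq_rpow, ← Real.rpow_add' ha (by rw [hsum]; exact one_ne_zero), hsum,
    Real.rpow_one]

lemma pnorm_nonneg (p : ℝ≥0∞) (v : Fin n → ℝ) : 0 ≤ pnorm p v := by
  unfold pnorm
  split_ifs
  · exact Real.iSup_nonneg fun i => abs_nonneg _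
  · positivity

lemma pnorm_mono (p : ℝ≥0∞) {v w : Fin n → ℝ} (h : ∀ i, |v i| ≤ |w i|) :
    pnorm p v ≤ pnorm p w := by
  unfold pnorm
  split_ifs
  · exact ciSup_mono (Set.finite_range _).bddAbove h
  · exact Real.rpow_le_rpow (by positivity)
      (sum_le_sum fun i _ => Real.rpow_le_rpow (abs_nonneg _) (h i) (by positivity))
      (by positivity)

lemma pnorm_const_mul (hp : p ≠ 0) {c : ℝ} (hc : 0 ≤ c) (v : Fin n → ℝ) :
    pnorm p (fun i => c * v i) = c * pnorm p v := by
  simp only [pnorm, abs_mul, abs_of_nonneg hc]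
  split_ifs with hp_top
  · exact (Real.mul_iSup_of_nonneg hc _).symm
  · have hp_pos : 0 < p.toReal := ENNReal.toReal_pos hp hp_top
    simp only [Real.mul_rpow hc (abs_nonneg _), ← mul_sum]
    rw [Real.mul_rpow (by positivity) (by positivity), one_div, Real.rpow_rpow_inv hc hp_pos.ne']

lemma abs_le_pnorm (hp : p ≠ 0) (v : Fin n → ℝ) (i : Fin n) : |v i| ≤ pnorm p v := by
  unfold pnorm
  split_ifs with hp_top
  · exact le_ciSup (f := fun i => |v i|) (Set.finite_range _).bddAbove i
  · have hp_pos : 0 < p.toReal := ENNReal.toReal_pos hp hp_top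
    rw [one_div, Real.le_rpow_inv_iff_of_pos (abs_nonneg _) (by positivity) hp_pos]
    exact single_le_sum (f := fun i => |v i| ^ p.toReal) (fun i _ => by positivity) (mem_univ i)

lemma sum_le_epow_card_mul_pnorm [p.HolderConjugate q] (v : Fin n → ℝ) (s : Finset (Fin n)) :
    ∑ i ∈ s, v i ≤ epow #s q * pnorm p v := by
  have hp : 1 ≤ p := ENNReal.HolderConjugate.one_le p q
  have hsum := toReal_inv_add_toReal_inv p q
  rcases eq_or_ne p ⊤ with rfl | hp_top
  · obtain rfl : q = 1 := (ENNReal.HolderConjugate.eq_top_iff_eq_one ⊤ q).1 rfl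
    simpa [epow] using sum_le_card_nsmul s v _ fun i _ =>
      (le_abs_self _).trans (abs_le_pnorm ENNReal.top_ne_zero v i)
  · have hp_one : 1 ≤ p.toReal := by simpa using ENNReal.toReal_mono hp_top hp
    have hp_pos : 0 < p.toReal := by linarith
    rw [ENNReal.toReal_inv] at hsum
    calc ∑ i ∈ s, v i
        ≤ ∑ i ∈ s, |v i| := sum_le_sum fun i _ => le_abs_self _
      _ ≤ ((#s : ℝ) ^ (p.toReal - 1) * ∑ i ∈ s, |v i| ^ p.toReal) ^ p.toReal⁻¹ := by
          rw [Real.le_rpow_inv_iff_of_pos (by positivity) (by positivity) hp_pos]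
          exact Real.rpow_sum_le_const_mul_sum_rpow s v hp_one
      _ ≤ ((#s : ℝ) ^ (p.toReal - 1) * ∑ i, |v i| ^ p.toReal) ^ p.toReal⁻¹ := by
          gcongr
          exact subset_univ s
      _ = epow #s q * pnorm p v := by
          rw [Real.mul_rpow (by positivity) (by positivity), ← Real.rpow_mul (by positivity),
            epow_eq_rpow, pnorm, if_neg hp_top, one_div, sub_mul,
            mul_inv_cancel₀ hp_pos.ne', one_mul, eq_sub_of_add_eq' hsum]

lemma prod_one_add_le_pow {ι : Type*} (s : Finset ι) {v : ι → ℝ} (hv : ∀ i ∈ s, 0 ≤ v i) :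
    ∏ i ∈ s, (1 + v i) ≤ (1 + (∑ i ∈ s, v i) / #s) ^ #s := by
  rcases s.eq_empty_or_nonempty with rfl | hs
  · simp
  have hcard : (0 : ℝ) < #s := by exact_mod_cast hs.card_pos
  have hnonneg : ∀ i ∈ s, 0 ≤ 1 + v i := fun i hi => add_nonneg zero_le_one (hv i hi)
  have hamgm := Real.geom_mean_le_arith_mean s (fun _ => 1) _ (fun _ _ => zero_le_one)
    (by simpa using hs) hnonneg
  simp only [Real.rpow_one, sum_const, nsmul_eq_mul, mul_one, one_mul, sum_add_distrib, add_div,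
    div_self hcard.ne'] at hamgm
  have hsum : 0 ≤ ∑ i ∈ s, v i := sum_nonneg hv
  rwa [Real.rpow_inv_le_iff_of_pos (prod_nonneg hnonneg) (by positivity) hcard,
    Real.rpow_natCast] at hamgm

lemma prod_one_add_le_pow_pnorm [p.HolderConjugate q] {v : Fin n → ℝ} (hv : ∀ i, 0 ≤ v i)
    (s : Finset (Fin n)) :
    ∏ i ∈ s, (1 + v i) ≤ (1 + pnorm p v / epow #s p) ^ #s := by
  rcases s.eq_empty_or_nonempty with rfl | hs
  · simp
  have hcard : (0 : ℝ) < #s := by exact_mod_cast hs.card_pos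
  have hmean : (∑ i ∈ s, v i) / #s ≤ pnorm p v / epow #s p := by
    have hp : 0 < epow #s p := by rw [epow_eq_rpow]; positivity
    rw [div_le_div_iff₀ hcard hp]
    calc (∑ i ∈ s, v i) * epow #s p
        ≤ epow #s q * pnorm p v * epow #s p := by
          gcongr
          exact sum_le_epow_card_mul_pnorm v s
      _ = pnorm p v * (epow #s p * epow #s q) := by ring
      _ = pnorm p v * #s := by rw [epow_mul_epow hcard.le]
  have hsum : 0 ≤ ∑ i ∈ s, v i := sum_nonneg fun i _ => hv i
  exact (prod_one_add_le_pow s fun i _ => hv i).trans (by gcongr)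

end PNorm

section Gauge

variable {n : ℕ} {p q : ℝ≥0∞} {s t u : ℝ}

/-- The function `β` of Proinov's semilocal theorem: one Weierstrass step started at `x` shrinks
each correction `|W_i|` by the factor `β (E x)`. -/
noncomputable def gaugeBeta (n : ℕ) (p q : ℝ≥0∞) (t : ℝ) : ℝ :=
  epow ((n : ℝ) - 1) q * t / (1 - t) *
    (1 + t / (epow ((n : ℝ) - 1) p * (1 - epow 2 q * t))) ^ (n - 1)

/-- The function `φ` of Proinov's semilocal theorem: one Weierstrass step started at `x` shrinks
`E` itself by the factor `φ (E x)`, the denominator accounting for the loss of separation. -/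
noncomputable def gaugePhi (n : ℕ) (p q : ℝ≥0∞) (t : ℝ) : ℝ :=
  gaugeBeta n p q t / (1 - epow 2 q * t)

lemma lt_one_of_epow_two_mul_lt_one (ht0 : 0 ≤ t) (ht : epow 2 q * t < 1) : t < 1 :=
  (le_mul_of_one_le_left ht0 (one_le_epow one_le_two q)).trans_lt ht

lemma gaugeBeta_le_mul (hn : 1 ≤ n) (hu : 0 ≤ u) (ht0 : 0 ≤ t) (ht : epow 2 q * t < 1)
    (hs0 : 0 ≤ s) (hs1 : s ≤ 1) (hut : u ≤ s * t) :
    gaugeBeta n p q u ≤ s * gaugeBeta n p q t := by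
  have hn' : 0 ≤ (n : ℝ) - 1 := sub_nonneg.2 (by exact_mod_cast hn)
  have hp := epow_nonneg hn' p
  have hq := epow_nonneg hn' q
  have hc := one_le_epow one_le_two q
  have hu_le : u ≤ t := hut.trans (mul_le_of_le_one_left ht0 hs1)
  have ht1 : 0 < 1 - t := sub_pos.2 (lt_one_of_epow_two_mul_lt_one ht0 ht)
  have hθ : 0 < 1 - epow 2 q * t := sub_pos.2 ht
  have hθu : 0 < 1 - epow 2 q * u := hθ.trans_le (by gcongr)
  unfold gaugeBeta
  simp only [mul_comm (epow ((n : ℝ) - 1) p), ← div_div]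
  calc _ ≤ epow ((n : ℝ) - 1) q * (s * t) / (1 - t) *
        (1 + t / (1 - epow 2 q * t) / epow ((n : ℝ) - 1) p) ^ (n - 1) := by gcongr
    _ = _ := by ring

lemma gaugeBeta_nonneg (hn : 1 ≤ n) (ht0 : 0 ≤ t) (ht : epow 2 q * t < 1) :
    0 ≤ gaugeBeta n p q t := by
  have hzero : gaugeBeta n p q 0 = 0 := by simp [gaugeBeta]
  have h := gaugeBeta_le_mul (p := p) hn le_rfl ht0 ht zero_le_one le_rfl (by simpa using ht0)
  rwa [hzero, one_mul] at h

lemma gaugePhi_nonneg (hn : 1 ≤ n) (ht0 : 0 ≤ t) (ht : epow 2 q * t < 1) :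
    0 ≤ gaugePhi n p q t :=
  div_nonneg (gaugeBeta_nonneg hn ht0 ht) (sub_nonneg.2 ht.le)

lemma gaugePhi_le_mul (hn : 1 ≤ n) (hu : 0 ≤ u) (ht0 : 0 ≤ t) (ht : epow 2 q * t < 1)
    (hs0 : 0 ≤ s) (hs1 : s ≤ 1) (hut : u ≤ s * t) :
    gaugePhi n p q u ≤ s * gaugePhi n p q t := by
  have hc := one_le_epow one_le_two q
  have hu_le : u ≤ t := hut.trans (mul_le_of_le_one_left ht0 hs1)
  have hβ := gaugeBeta_nonneg (p := p) hn ht0 ht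
  unfold gaugePhi
  rw [← mul_div_assoc]
  exact div_le_div₀ (mul_nonneg hs0 hβ) (gaugeBeta_le_mul hn hu ht0 ht hs0 hs1 hut)
    (sub_pos.2 ht) (by gcongr)

lemma gaugeBeta_eq_mul_gaugePhi (ht : epow 2 q * t < 1) :
    gaugeBeta n p q t = (1 - epow 2 q * t) * gaugePhi n p q t :=
  (mul_div_cancel₀ _ (sub_pos.2 ht).ne').symm

lemma gaugeBeta_lt_one (ht0 : 0 ≤ t) (ht : epow 2 q * t < 1) (hφ : gaugePhi n p q t ≤ 1) :
    gaugeBeta n p q t < 1 := by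
  rcases ht0.eq_or_lt with rfl | ht_pos
  · simp [gaugeBeta]
  · have hc := one_le_epow one_le_two q
    calc gaugeBeta n p q t = (1 - epow 2 q * t) * gaugePhi n p q t :=
          gaugeBeta_eq_mul_gaugePhi ht
      _ ≤ 1 - epow 2 q * t := mul_le_of_le_one_right (sub_pos.2 ht).le hφ
      _ < 1 := sub_lt_self _ (by positivity)

end Gauge

section LagrangeForm

variable {K : Type*} [NormedField K] {n : ℕ} {f : Polynomial K} {x : Fin n → K}

lemma eq_leadingCoeff_mul_nodal_add_interpolate {F ι : Type*} [Field F] [DecidableEq ι]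
    {s : Finset ι} {v : ι → F} (hv : Set.InjOn v s) {f : Polynomial F} (hf : f.natDegree = #s) :
    f = Polynomial.C f.leadingCoeff * Lagrange.nodal s v +
      Lagrange.interpolate s v fun i => f.eval (v i) := by
  rcases eq_or_ne f 0 with rfl | hf0
  · simp
  have hlc : f.leadingCoeff ≠ 0 := Polynomial.leadingCoeff_ne_zero.2 hf0
  have hdeg : f.degree = #s := by rw [Polynomial.degree_eq_natDegree hf0, hf]
  rw [← sub_eq_iff_eq_add']
  refine Lagrange.eq_interpolate_of_eval_eq _ hv ?_ fun i hi => ?_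
  · rw [← hdeg]
    refine Polynomial.degree_sub_lt_left ?_ hf0 ?_
    · rw [Polynomial.degree_C_mul hlc, Lagrange.degree_nodal, hdeg]
    · rw [Polynomial.leadingCoeff_mul, Polynomial.leadingCoeff_C,
        Lagrange.nodal_monic.leadingCoeff, mul_one]
  · rw [Polynomial.eval_sub, Polynomial.eval_mul, Lagrange.eval_nodal_at_node hi, mul_zero,
      sub_zero]

lemma eval_basis_eq_div {F ι : Type*} [Field F] [DecidableEq ι] (s : Finset ι) (v : ι → F)
    (i : ι) (z : F) :
    (Lagrange.basis s v i).eval z =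
      (∏ j ∈ s.erase i, (z - v j)) / ∏ j ∈ s.erase i, (v i - v j) := by
  simp [Lagrange.basis, Lagrange.basisDivisor, Polynomial.eval_prod, prod_mul_distrib,
    div_eq_inv_mul]

lemma prod_sub_ne_zero (hx : Function.Injective x) (i : Fin n) :
    ∏ j ∈ univ.erase i, (x i - x j) ≠ 0 :=
  prod_ne_zero_iff.2 fun _ hj => sub_ne_zero.2 (hx.ne (ne_of_mem_erase hj).symm)

lemma eval_eq_leadingCoeff_mul_prod_add_sum (hf : f.natDegree = n) (hx : Function.Injective x)
    (z : K) :
    f.eval z = f.leadingCoeff *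
      (∏ j, (z - x j) + ∑ j, Wcorr f x j * ∏ l ∈ univ.erase j, (z - x l)) := by
  rcases eq_or_ne f 0 with rfl | hf0
  · simp
  have hlc : f.leadingCoeff ≠ 0 := Polynomial.leadingCoeff_ne_zero.2 hf0
  have h := congrArg (Polynomial.eval z) (eq_leadingCoeff_mul_nodal_add_interpolate
    (s := univ) hx.injOn (hf.trans (card_fin n).symm))
  rw [h]
  simp only [Polynomial.eval_add, Polynomial.eval_mul, Polynomial.eval_C, Lagrange.eval_nodal,
    Lagrange.interpolate_apply, Polynomial.eval_finsetSum, eval_basis_eq_div, mul_add, mul_sum,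
    Wcorr]
  congr 1
  refine sum_congr rfl fun j _ => ?_
  have hprod := prod_sub_ne_zero hx j
  field_simp

lemma eval_eq_leadingCoeff_mul_prod_erase (hf : f.natDegree = n) (hx : Function.Injective x)
    (i : Fin n) {z : K} (hz : ∀ j ≠ i, z ≠ x j) :
    f.eval z = f.leadingCoeff * (∏ j ∈ univ.erase i, (z - x j)) *
      (z - x i + Wcorr f x i + (z - x i) * ∑ j ∈ univ.erase i, Wcorr f x j / (z - x j)) := by
  have hterm : ∀ j ∈ univ.erase i, Wcorr f x j * ∏ l ∈ univ.erase j, (z - x l) =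
      (∏ l, (z - x l)) * (Wcorr f x j / (z - x j)) := fun j hj => by
    have hzj : z - x j ≠ 0 := sub_ne_zero.2 (hz j (ne_of_mem_erase hj))
    rw [← mul_prod_erase _ _ (mem_univ j)]
    field_simp
  rw [eval_eq_leadingCoeff_mul_prod_add_sum hf hx, ← add_sum_erase _ _ (mem_univ i),
    sum_congr rfl hterm, ← mul_sum, ← mul_prod_erase _ _ (mem_univ i)]
  ring

end LagrangeForm

section WeierstrassStep

variable {K : Type*} [NormedField K] {n : ℕ} {p q : ℝ≥0∞} {f : Polynomial K} {x : Fin n → K}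

/-- The `i`-th component of the vector `W(x)/d(x)`: the Weierstrass correction relative to the
separation of the nodes. -/
noncomputable def relCorr (f : Polynomial K) (x : Fin n → K) (i : Fin n) : ℝ :=
  ‖Wcorr f x i‖ / dsep x i

/-- The function of initial conditions `E(x) = ‖W(x)/d(x)‖_p`. -/
noncomputable def relCorrNorm (p : ℝ≥0∞) (f : Polynomial K) (x : Fin n → K) : ℝ :=
  pnorm p (relCorr f x)

/-- One step `x ↦ x - W(x)` of the Weierstrass iteration. -/
noncomputable def weierstrassMap (f : Polynomial K) (x : Fin n → K) : Fin n → K :=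
  fun i => x i - Wcorr f x i

lemma weierstrassMap_sub (f : Polynomial K) (x : Fin n → K) (i : Fin n) :
    weierstrassMap f x i - x i = -Wcorr f x i :=
  sub_sub_cancel_left _ _

lemma Wcorr_weierstrassMap (hf : f.natDegree = n) (hx : Function.Injective x)
    (hy : Function.Injective (weierstrassMap f x)) {i : Fin n}
    (hne : ∀ j ≠ i, weierstrassMap f x i ≠ x j) :
    Wcorr f (weierstrassMap f x) i = -Wcorr f x i *
      (∑ j ∈ univ.erase i, Wcorr f x j / (weierstrassMap f x i - x j)) *
      ∏ j ∈ univ.erase i, (1 - Wcorr f x j / (weierstrassMap f x i - weierstrassMap f x j)) := by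
  have hlc : f.leadingCoeff ≠ 0 := by
    rw [Polynomial.leadingCoeff_ne_zero]
    rintro rfl
    exact i.pos.ne hf
  have hprod : ∏ j ∈ univ.erase i,
        (1 - Wcorr f x j / (weierstrassMap f x i - weierstrassMap f x j)) =
      (∏ j ∈ univ.erase i, (weierstrassMap f x i - x j)) /
        ∏ j ∈ univ.erase i, (weierstrassMap f x i - weierstrassMap f x j) := by
    rw [← prod_div_distrib]
    refine prod_congr rfl fun j hj => ?_
    have hij := sub_ne_zero.2 (hy.ne (ne_of_mem_erase hj).symm)
    have hxj : weierstrassMap f x j + Wcorr f x j = x j := sub_add_cancel _ _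
    rw [one_sub_div hij, sub_sub, hxj]
  rw [hprod, Wcorr, eval_eq_leadingCoeff_mul_prod_erase hf hx i hne, weierstrassMap_sub]
  field_simp
  ring

lemma dsep_nonneg (x : Fin n → K) (i : Fin n) : 0 ≤ dsep x i :=
  Real.sInf_nonneg (by rintro r ⟨j, -, rfl⟩; exact norm_nonneg _)

lemma dsep_le (x : Fin n → K) {i j : Fin n} (hji : j ≠ i) : dsep x i ≤ ‖x i - x j‖ :=
  csInf_le ⟨0, by rintro r ⟨k, -, rfl⟩; exact norm_nonneg _⟩ ⟨j, hji, rfl⟩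

lemma exists_dsep_eq [Nontrivial (Fin n)] (x : Fin n → K) (i : Fin n) :
    ∃ j, j ≠ i ∧ dsep x i = ‖x i - x j‖ := by
  obtain ⟨j, hj⟩ := exists_ne i
  refine Set.Nonempty.csInf_mem (s := {r | ∃ j, j ≠ i ∧ r = ‖x i - x j‖}) ⟨_, j, hj, rfl⟩
    ((Set.finite_range fun j => ‖x i - x j‖).subset ?_)
  rintro r ⟨k, -, rfl⟩
  exact ⟨k, rfl⟩

lemma dsep_pos [Nontrivial (Fin n)] (hx : Function.Injective x) (i : Fin n) : 0 < dsep x i := by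
  obtain ⟨j, hji, hd⟩ := exists_dsep_eq x i
  rw [hd, norm_pos_iff, sub_ne_zero]
  exact hx.ne hji.symm

lemma relCorr_nonneg (f : Polynomial K) (x : Fin n → K) (i : Fin n) : 0 ≤ relCorr f x i :=
  div_nonneg (norm_nonneg _) (dsep_nonneg x i)

lemma relCorrNorm_nonneg (p : ℝ≥0∞) (f : Polynomial K) (x : Fin n → K) : 0 ≤ relCorrNorm p f x :=
  pnorm_nonneg p _

lemma relCorr_le_relCorrNorm (hp : p ≠ 0) (i : Fin n) : relCorr f x i ≤ relCorrNorm p f x :=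
  (le_abs_self _).trans (abs_le_pnorm hp _ i)

lemma norm_Wcorr_le_relCorr_mul (hx : Function.Injective x) {i j : Fin n} (hij : i ≠ j) :
    ‖Wcorr f x i‖ ≤ relCorr f x i * ‖x i - x j‖ := by
  have : Nontrivial (Fin n) := nontrivial_of_ne i j hij
  calc ‖Wcorr f x i‖ = relCorr f x i * dsep x i := (div_mul_cancel₀ _ (dsep_pos hx i).ne').symm
    _ ≤ relCorr f x i * ‖x i - x j‖ :=
        mul_le_mul_of_nonneg_left (dsep_le x hij.symm) (relCorr_nonneg f x i)

lemma norm_Wcorr_add_norm_Wcorr_le [p.HolderConjugate q] (hx : Function.Injective x)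
    {i j : Fin n} (hij : i ≠ j) :
    ‖Wcorr f x i‖ + ‖Wcorr f x j‖ ≤ epow 2 q * relCorrNorm p f x * ‖x i - x j‖ := by
  have hpair : relCorr f x i + relCorr f x j ≤ epow 2 q * relCorrNorm p f x := by
    simpa [relCorrNorm, sum_pair hij, card_pair hij] using
      sum_le_epow_card_mul_pnorm (p := p) (q := q) (relCorr f x) {i, j}
  calc ‖Wcorr f x i‖ + ‖Wcorr f x j‖
      ≤ relCorr f x i * ‖x i - x j‖ + relCorr f x j * ‖x i - x j‖ :=
        add_le_add (norm_Wcorr_le_relCorr_mul hx hij)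
          (norm_sub_rev (x i) (x j) ▸ norm_Wcorr_le_relCorr_mul hx hij.symm)
    _ = (relCorr f x i + relCorr f x j) * ‖x i - x j‖ := (add_mul _ _ _).symm
    _ ≤ epow 2 q * relCorrNorm p f x * ‖x i - x j‖ := by gcongr

lemma one_sub_mul_norm_sub_le_norm_weierstrassMap_sub_weierstrassMap [p.HolderConjugate q]
    (hx : Function.Injective x) (i j : Fin n) :
    (1 - epow 2 q * relCorrNorm p f x) * ‖x i - x j‖ ≤
      ‖weierstrassMap f x i - weierstrassMap f x j‖ := by
  rcases eq_or_ne i j with rfl | hij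
  · simp
  have hW := norm_Wcorr_add_norm_Wcorr_le (p := p) (q := q) (f := f) hx hij
  have hsplit : weierstrassMap f x i - weierstrassMap f x j =
      x i - x j - (Wcorr f x i - Wcorr f x j) := sub_sub_sub_comm _ _ _ _
  have hrev := norm_sub_norm_le (x i - x j) (Wcorr f x i - Wcorr f x j)
  rw [hsplit]
  linarith [norm_sub_le (Wcorr f x i) (Wcorr f x j)]

lemma one_sub_mul_norm_sub_le_norm_weierstrassMap_sub (hp : p ≠ 0) (hx : Function.Injective x)
    (i j : Fin n) :
    (1 - relCorrNorm p f x) * ‖x i - x j‖ ≤ ‖weierstrassMap f x i - x j‖ := by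
  rcases eq_or_ne i j with rfl | hij
  · simp
  have hW : ‖Wcorr f x i‖ ≤ relCorrNorm p f x * ‖x i - x j‖ :=
    (norm_Wcorr_le_relCorr_mul hx hij).trans (by gcongr; exact relCorr_le_relCorrNorm hp i)
  have hrev := norm_sub_norm_le (x i - x j) (Wcorr f x i)
  rw [weierstrassMap, sub_right_comm]
  linarith

lemma weierstrassMap_injective [p.HolderConjugate q] (hx : Function.Injective x)
    (hE : epow 2 q * relCorrNorm p f x < 1) : Function.Injective (weierstrassMap f x) := by
  intro i j hij
  by_contra hne
  have hle :=
    one_sub_mul_norm_sub_le_norm_weierstrassMap_sub_weierstrassMap (p := p) (q := q) (f := f) hx i j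
  rw [hij, sub_self, norm_zero] at hle
  have hpos : 0 < ‖x i - x j‖ := norm_pos_iff.2 (sub_ne_zero.2 (hx.ne hne))
  exact hle.not_gt (mul_pos (sub_pos.2 hE) hpos)

lemma one_sub_mul_dsep_le_dsep_weierstrassMap [Nontrivial (Fin n)] [p.HolderConjugate q]
    (hx : Function.Injective x) (hE : epow 2 q * relCorrNorm p f x ≤ 1) (i : Fin n) :
    (1 - epow 2 q * relCorrNorm p f x) * dsep x i ≤ dsep (weierstrassMap f x) i := by
  obtain ⟨j, hji, hd⟩ := exists_dsep_eq (weierstrassMap f x) i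
  rw [hd]
  exact (mul_le_mul_of_nonneg_left (dsep_le x hji) (sub_nonneg.2 hE)).trans
    (one_sub_mul_norm_sub_le_norm_weierstrassMap_sub_weierstrassMap hx i j)

lemma norm_Wcorr_div_le {c d : ℝ} (hx : Function.Injective x) {i j : Fin n} (hij : i ≠ j)
    (hc : 0 < c) (hcd : c * ‖x i - x j‖ ≤ d) : ‖Wcorr f x j‖ / d ≤ relCorr f x j / c := by
  have hpos : 0 < ‖x i - x j‖ := norm_pos_iff.2 (sub_ne_zero.2 (hx.ne hij))
  calc ‖Wcorr f x j‖ / d ≤ relCorr f x j * ‖x i - x j‖ / (c * ‖x i - x j‖) := by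
        gcongr
        · exact mul_nonneg (relCorr_nonneg f x j) hpos.le
        · exact norm_sub_rev (x i) (x j) ▸ norm_Wcorr_le_relCorr_mul hx hij.symm
    _ = relCorr f x j / c := mul_div_mul_right _ _ hpos.ne'

lemma cast_card_univ_erase (i : Fin n) : (#(univ.erase i) : ℝ) = n - 1 := by
  rw [card_erase_of_mem (mem_univ i), card_fin, Nat.cast_pred i.pos]

lemma norm_sum_Wcorr_div_le [p.HolderConjugate q] (hx : Function.Injective x)
    (hE : relCorrNorm p f x < 1) (i : Fin n) :
    ‖∑ j ∈ univ.erase i, Wcorr f x j / (weierstrassMap f x i - x j)‖ ≤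
      epow ((n : ℝ) - 1) q * relCorrNorm p f x / (1 - relCorrNorm p f x) := by
  have hp := ENNReal.HolderConjugate.ne_zero p q
  have hE' : 0 < 1 - relCorrNorm p f x := sub_pos.2 hE
  calc ‖∑ j ∈ univ.erase i, Wcorr f x j / (weierstrassMap f x i - x j)‖
      ≤ ∑ j ∈ univ.erase i, relCorr f x j / (1 - relCorrNorm p f x) := by
        refine norm_sum_le_of_le _ fun j hj => ?_
        rw [norm_div]
        exact norm_Wcorr_div_le hx (ne_of_mem_erase hj).symm hE'
          (one_sub_mul_norm_sub_le_norm_weierstrassMap_sub hp hx i j)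
    _ = (∑ j ∈ univ.erase i, relCorr f x j) / (1 - relCorrNorm p f x) := (sum_div _ _ _).symm
    _ ≤ epow ((n : ℝ) - 1) q * relCorrNorm p f x / (1 - relCorrNorm p f x) := by
        rw [← cast_card_univ_erase i]
        gcongr
        exact sum_le_epow_card_mul_pnorm _ _

lemma norm_prod_one_sub_Wcorr_div_le [p.HolderConjugate q] (hx : Function.Injective x)
    (hE : epow 2 q * relCorrNorm p f x < 1) (i : Fin n) :
    ‖∏ j ∈ univ.erase i,
        (1 - Wcorr f x j / (weierstrassMap f x i - weierstrassMap f x j))‖ ≤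
      (1 + relCorrNorm p f x /
        (epow ((n : ℝ) - 1) p * (1 - epow 2 q * relCorrNorm p f x))) ^ (n - 1) := by
  set θ := 1 - epow 2 q * relCorrNorm p f x
  have hθ : 0 < θ := sub_pos.2 hE
  have hfactor : ∀ j ∈ univ.erase i,
      ‖1 - Wcorr f x j / (weierstrassMap f x i - weierstrassMap f x j)‖ ≤
        1 + θ⁻¹ * relCorr f x j := fun j hj => by
    refine (norm_sub_le _ _).trans ?_
    rw [norm_one, norm_div, ← div_eq_inv_mul]
    exact add_le_add le_rfl <| norm_Wcorr_div_le hx (ne_of_mem_erase hj).symm hθ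
      (one_sub_mul_norm_sub_le_norm_weierstrassMap_sub_weierstrassMap hx i j)
  have hnonneg : ∀ j, 0 ≤ θ⁻¹ * relCorr f x j := fun j =>
    mul_nonneg (inv_nonneg.2 hθ.le) (relCorr_nonneg f x j)
  calc _ ≤ ∏ j ∈ univ.erase i, (1 + θ⁻¹ * relCorr f x j) := by
        rw [norm_prod]
        exact prod_le_prod (fun _ _ => norm_nonneg _) hfactor
    _ ≤ (1 + θ⁻¹ * relCorrNorm p f x / epow #(univ.erase i) p) ^ #(univ.erase i) := by
        rw [relCorrNorm, ← pnorm_const_mul (ENNReal.HolderConjugate.ne_zero p q)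
          (inv_nonneg.2 hθ.le)]
        exact prod_one_add_le_pow_pnorm (q := q) hnonneg _
    _ = _ := by
        rw [cast_card_univ_erase, card_erase_of_mem (mem_univ i), card_fin, ← div_eq_inv_mul,
          div_div, mul_comm θ]

lemma norm_Wcorr_weierstrassMap_le [p.HolderConjugate q] (hf : f.natDegree = n)
    (hx : Function.Injective x) (hE : epow 2 q * relCorrNorm p f x < 1) (i : Fin n) :
    ‖Wcorr f (weierstrassMap f x) i‖ ≤ gaugeBeta n p q (relCorrNorm p f x) * ‖Wcorr f x i‖ := by
  have hE1 := lt_one_of_epow_two_mul_lt_one (relCorrNorm_nonneg p f x) hE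
  have hne : ∀ j ≠ i, weierstrassMap f x i ≠ x j := fun j hji h => by
    have hle := one_sub_mul_norm_sub_le_norm_weierstrassMap_sub (f := f)
      (ENNReal.HolderConjugate.ne_zero p q) hx i j
    rw [h, sub_self, norm_zero] at hle
    have hpos : 0 < ‖x i - x j‖ := norm_pos_iff.2 (sub_ne_zero.2 (hx.ne hji.symm))
    exact hle.not_gt (mul_pos (sub_pos.2 hE1) hpos)
  have hsum := norm_sum_Wcorr_div_le (q := q) hx hE1 i
  rw [Wcorr_weierstrassMap hf hx (weierstrassMap_injective hx hE) hne, norm_mul, norm_mul,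
    norm_neg, mul_assoc, mul_comm, gaugeBeta]
  gcongr
  · exact (norm_nonneg _).trans hsum
  · exact norm_prod_one_sub_Wcorr_div_le hx hE i

lemma relCorrNorm_weierstrassMap_le [Nontrivial (Fin n)] [p.HolderConjugate q]
    (hf : f.natDegree = n) (hx : Function.Injective x)
    (hE : epow 2 q * relCorrNorm p f x < 1) :
    relCorrNorm p f (weierstrassMap f x) ≤
      gaugePhi n p q (relCorrNorm p f x) * relCorrNorm p f x := by
  have hn : 2 ≤ n := Fin.nontrivial_iff_two_le.1 ‹_›
  have hE0 := relCorrNorm_nonneg p f x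
  have hθ : 0 < 1 - epow 2 q * relCorrNorm p f x := sub_pos.2 hE
  have hβ := gaugeBeta_nonneg (p := p) (one_le_two.trans hn) hE0 hE
  have hφ := gaugePhi_nonneg (p := p) (one_le_two.trans hn) hE0 hE
  have hcomp : ∀ i, relCorr f (weierstrassMap f x) i ≤
      gaugePhi n p q (relCorrNorm p f x) * relCorr f x i := fun i => by
    have hd : 0 < dsep x i := dsep_pos hx i
    calc relCorr f (weierstrassMap f x) i
        ≤ gaugeBeta n p q (relCorrNorm p f x) * ‖Wcorr f x i‖ /
            ((1 - epow 2 q * relCorrNorm p f x) * dsep x i) :=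
          div_le_div₀ (mul_nonneg hβ (norm_nonneg _)) (norm_Wcorr_weierstrassMap_le hf hx hE i)
            (mul_pos hθ hd) (one_sub_mul_dsep_le_dsep_weierstrassMap hx hE.le i)
      _ = _ := mul_div_mul_comm _ _ _ _
  calc relCorrNorm p f (weierstrassMap f x)
      ≤ pnorm p fun i => gaugePhi n p q (relCorrNorm p f x) * relCorr f x i :=
        pnorm_mono p fun i => abs_le_abs_of_nonneg (relCorr_nonneg _ _ i) (hcomp i)
    _ = _ := pnorm_const_mul (ENNReal.HolderConjugate.ne_zero p q) hφ _

end WeierstrassStep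


section QuadraticConvergence

variable {α : Type*} [PseudoMetricSpace α] {u : ℕ → α} {w : ℕ → ℝ} {θ Λ C : ℝ}

lemma le_pow_mul_pow_mul_of_succ_le (hθ : 0 ≤ θ) (hΛ : 0 ≤ Λ)
    (hw : ∀ k, w (k + 1) ≤ θ * Λ ^ 2 ^ k * w k) (k : ℕ) :
    w k ≤ θ ^ k * Λ ^ (2 ^ k - 1) * w 0 := by
  induction k with
  | zero => simp
  | succ k ih =>
    have hexp : 2 ^ k + (2 ^ k - 1) = 2 ^ (k + 1) - 1 := by
      have := Nat.one_le_two_pow (n := k)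
      omega
    calc w (k + 1) ≤ θ * Λ ^ 2 ^ k * w k := hw k
      _ ≤ θ * Λ ^ 2 ^ k * (θ ^ k * Λ ^ (2 ^ k - 1) * w 0) := by gcongr
      _ = θ ^ (k + 1) * Λ ^ (2 ^ k + (2 ^ k - 1)) * w 0 := by ring
      _ = θ ^ (k + 1) * Λ ^ (2 ^ (k + 1) - 1) * w 0 := by rw [hexp]

lemma two_pow_sub_one_add_mul_le (k m : ℕ) : 2 ^ k - 1 + 2 ^ k * m ≤ 2 ^ (k + m) - 1 := by
  have hk := Nat.one_le_two_pow (n := k)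
  have hm : 2 ^ k * (m + 1) ≤ 2 ^ k * 2 ^ m := Nat.mul_le_mul_left _ Nat.lt_two_pow_self
  rw [pow_add]
  rw [mul_add_one] at hm
  omega

lemma dist_add_le_geometric (hθ : 0 ≤ θ) (hΛ0 : 0 ≤ Λ) (hΛ1 : Λ ≤ 1)
    (hu : ∀ k, dist (u k) (u (k + 1)) ≤ θ ^ k * Λ ^ (2 ^ k - 1) * C) (k m : ℕ) :
    dist (u (k + m)) (u (k + m + 1)) ≤
      θ ^ k * Λ ^ (2 ^ k - 1) * C * (θ * Λ ^ 2 ^ k) ^ m := by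
  have hC : 0 ≤ C := dist_nonneg.trans (by simpa using hu 0)
  calc dist (u (k + m)) (u (k + m + 1))
      ≤ θ ^ (k + m) * Λ ^ (2 ^ (k + m) - 1) * C := hu (k + m)
    _ ≤ θ ^ (k + m) * Λ ^ (2 ^ k - 1 + 2 ^ k * m) * C := by
        have hΛ := pow_le_pow_of_le_one hΛ0 hΛ1 (two_pow_sub_one_add_mul_le k m)
        gcongr
    _ = θ ^ k * Λ ^ (2 ^ k - 1) * C * (θ * Λ ^ 2 ^ k) ^ m := by
        rw [mul_pow, ← pow_mul, pow_add, pow_add]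
        ring

lemma dist_le_geometric (hθ : 0 ≤ θ) (hΛ0 : 0 ≤ Λ) (hΛ1 : Λ ≤ 1)
    (hu : ∀ k, dist (u k) (u (k + 1)) ≤ θ ^ k * Λ ^ (2 ^ k - 1) * C) (m : ℕ) :
    dist (u m) (u (m + 1)) ≤ C * (θ * Λ) ^ m := by
  simpa using dist_add_le_geometric hθ hΛ0 hΛ1 hu 0 m

lemma dist_zero_le_div_of_dist_le (hθ : 0 ≤ θ) (hΛ0 : 0 ≤ Λ) (hΛ1 : Λ ≤ 1) (hθΛ : θ * Λ < 1)
    (hu : ∀ k, dist (u k) (u (k + 1)) ≤ θ ^ k * Λ ^ (2 ^ k - 1) * C) (k : ℕ) :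
    dist (u 0) (u k) ≤ C / (1 - θ * Λ) := by
  have hC : 0 ≤ C := dist_nonneg.trans (by simpa using hu 0)
  calc dist (u 0) (u k) ≤ ∑ m ∈ range k, C * (θ * Λ) ^ m :=
        dist_le_range_sum_of_dist_le k fun {m} _ => dist_le_geometric hθ hΛ0 hΛ1 hu m
    _ = C * ∑ m ∈ range k, (θ * Λ) ^ m := (mul_sum _ _ _).symm
    _ ≤ C * (1 - θ * Λ)⁻¹ := by
        have hgeom := hasSum_geometric_of_lt_one (mul_nonneg hθ hΛ0) hθΛ
        have hle := sum_le_hasSum (range k) (fun m _ => by positivity) hgeom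
        gcongr
    _ = C / (1 - θ * Λ) := (div_eq_mul_inv _ _).symm

lemma dist_le_div_of_tendsto (hθ : 0 ≤ θ) (hΛ0 : 0 ≤ Λ) (hΛ1 : Λ ≤ 1) (hθΛ : θ * Λ < 1)
    (hu : ∀ k, dist (u k) (u (k + 1)) ≤ θ ^ k * Λ ^ (2 ^ k - 1) * C) {a : α}
    (ha : Tendsto u atTop (𝓝 a)) (k : ℕ) :
    dist (u k) a ≤ θ ^ k * Λ ^ (2 ^ k - 1) / (1 - θ * Λ ^ 2 ^ k) * C := by
  have hratio : θ * Λ ^ 2 ^ k < 1 :=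
    (mul_le_mul_of_nonneg_left (pow_le_of_le_one hΛ0 hΛ1 (by positivity)) hθ).trans_lt hθΛ
  have hshift : Tendsto (fun m => u (k + m)) atTop (𝓝 a) := by
    simpa only [add_comm k] using (tendsto_add_atTop_iff_nat k).2 ha
  rw [div_mul_eq_mul_div]
  exact dist_le_of_le_geometric_of_tendsto₀ _ _ hratio
    (dist_add_le_geometric hθ hΛ0 hΛ1 hu k) hshift

end QuadraticConvergence

section Orbit

variable {K : Type*} [NormedField K] {n : ℕ} {p q : ℝ≥0∞} {f : Polynomial K}

/-- The hypotheses of the semilocal theorem on a starting point `x`. The condition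
`E(x) < 1 / 2^{1/q}` is written without division. -/
structure IsInitialPoint (p q : ℝ≥0∞) (f : Polynomial K) (x : Fin n → K) : Prop where
  injective : Function.Injective x
  epow_mul_lt_one : epow 2 q * relCorrNorm p f x < 1
  gaugePhi_le_one : gaugePhi n p q (relCorrNorm p f x) ≤ 1

namespace IsInitialPoint

variable {x : Fin n → K}

protected lemma gaugeBeta_lt_one (hx : IsInitialPoint p q f x) :
    gaugeBeta n p q (relCorrNorm p f x) < 1 :=
  gaugeBeta_lt_one (relCorrNorm_nonneg p f x) hx.epow_mul_lt_one hx.gaugePhi_le_one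

lemma one_sub_mul_gaugePhi_lt_one (hx : IsInitialPoint p q f x) :
    (1 - epow 2 q * relCorrNorm p f x) * gaugePhi n p q (relCorrNorm p f x) < 1 :=
  gaugeBeta_eq_mul_gaugePhi hx.epow_mul_lt_one ▸ hx.gaugeBeta_lt_one

variable [Nontrivial (Fin n)]

protected lemma gaugePhi_nonneg (hx : IsInitialPoint p q f x) :
    0 ≤ gaugePhi n p q (relCorrNorm p f x) :=
  gaugePhi_nonneg (one_le_two.trans (Fin.nontrivial_iff_two_le.1 ‹_›))
    (relCorrNorm_nonneg p f x) hx.epow_mul_lt_one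

variable [p.HolderConjugate q]

lemma gaugePhi_weierstrassMap_le (hx : IsInitialPoint p q f x) (hf : f.natDegree = n) :
    gaugePhi n p q (relCorrNorm p f (weierstrassMap f x)) ≤
      gaugePhi n p q (relCorrNorm p f x) ^ 2 := by
  have hn : 2 ≤ n := Fin.nontrivial_iff_two_le.1 ‹_›
  rw [sq]
  exact gaugePhi_le_mul (one_le_two.trans hn) (relCorrNorm_nonneg p f _)
    (relCorrNorm_nonneg p f x) hx.epow_mul_lt_one hx.gaugePhi_nonneg hx.gaugePhi_le_one
    (relCorrNorm_weierstrassMap_le hf hx.injective hx.epow_mul_lt_one)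

lemma relCorrNorm_weierstrassMap_le_self (hx : IsInitialPoint p q f x) (hf : f.natDegree = n) :
    relCorrNorm p f (weierstrassMap f x) ≤ relCorrNorm p f x :=
  (relCorrNorm_weierstrassMap_le hf hx.injective hx.epow_mul_lt_one).trans
    (mul_le_of_le_one_left (relCorrNorm_nonneg p f x) hx.gaugePhi_le_one)

protected lemma weierstrassMap (hx : IsInitialPoint p q f x) (hf : f.natDegree = n) :
    IsInitialPoint p q f (weierstrassMap f x) where
  injective := weierstrassMap_injective hx.injective hx.epow_mul_lt_one
  epow_mul_lt_one := (mul_le_mul_of_nonneg_left (hx.relCorrNorm_weierstrassMap_le_self hf)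
    (epow_nonneg zero_le_two q)).trans_lt hx.epow_mul_lt_one
  gaugePhi_le_one := (hx.gaugePhi_weierstrassMap_le hf).trans
    (pow_le_one₀ hx.gaugePhi_nonneg hx.gaugePhi_le_one)

lemma gaugeBeta_weierstrassMap_le (hx : IsInitialPoint p q f x) (hf : f.natDegree = n) :
    gaugeBeta n p q (relCorrNorm p f (weierstrassMap f x)) ≤
      gaugePhi n p q (relCorrNorm p f x) * gaugeBeta n p q (relCorrNorm p f x) := by
  have hn : 2 ≤ n := Fin.nontrivial_iff_two_le.1 ‹_›
  exact gaugeBeta_le_mul (one_le_two.trans hn) (relCorrNorm_nonneg p f _)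
    (relCorrNorm_nonneg p f x) hx.epow_mul_lt_one hx.gaugePhi_nonneg hx.gaugePhi_le_one
    (relCorrNorm_weierstrassMap_le hf hx.injective hx.epow_mul_lt_one)

end IsInitialPoint

section Iterates

variable {x : ℕ → Fin n → K} [Nontrivial (Fin n)] [p.HolderConjugate q]

lemma IsInitialPoint.iterate (h0 : IsInitialPoint p q f (x 0)) (hf : f.natDegree = n)
    (hiter : ∀ k, x (k + 1) = weierstrassMap f (x k)) (k : ℕ) : IsInitialPoint p q f (x k) := by
  induction k with
  | zero => exact h0
  | succ k ih => exact hiter k ▸ ih.weierstrassMap hf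

lemma gaugePhi_iterate_le (h0 : IsInitialPoint p q f (x 0)) (hf : f.natDegree = n)
    (hiter : ∀ k, x (k + 1) = weierstrassMap f (x k)) (k : ℕ) :
    gaugePhi n p q (relCorrNorm p f (x k)) ≤
      gaugePhi n p q (relCorrNorm p f (x 0)) ^ 2 ^ k := by
  induction k with
  | zero => simp
  | succ k ih =>
    have hk := h0.iterate hf hiter k
    rw [hiter k, pow_succ, pow_mul]
    exact (hk.gaugePhi_weierstrassMap_le hf).trans (pow_le_pow_left₀ hk.gaugePhi_nonneg ih 2)

lemma gaugeBeta_iterate_le (h0 : IsInitialPoint p q f (x 0)) (hf : f.natDegree = n)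
    (hiter : ∀ k, x (k + 1) = weierstrassMap f (x k)) (k : ℕ) :
    gaugeBeta n p q (relCorrNorm p f (x k)) ≤
      (1 - epow 2 q * relCorrNorm p f (x 0)) *
        gaugePhi n p q (relCorrNorm p f (x 0)) ^ 2 ^ k := by
  induction k with
  | zero => simp [gaugeBeta_eq_mul_gaugePhi h0.epow_mul_lt_one]
  | succ k ih =>
    have hn : 2 ≤ n := Fin.nontrivial_iff_two_le.1 ‹_›
    have hk := h0.iterate hf hiter k
    have hφ0 := h0.gaugePhi_nonneg
    have hβ := gaugeBeta_nonneg (p := p) (one_le_two.trans hn) (relCorrNorm_nonneg p f (x k))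
      hk.epow_mul_lt_one
    rw [hiter k]
    calc gaugeBeta n p q (relCorrNorm p f (weierstrassMap f (x k)))
        ≤ gaugePhi n p q (relCorrNorm p f (x k)) * gaugeBeta n p q (relCorrNorm p f (x k)) :=
          hk.gaugeBeta_weierstrassMap_le hf
      _ ≤ gaugePhi n p q (relCorrNorm p f (x 0)) ^ 2 ^ k *
            ((1 - epow 2 q * relCorrNorm p f (x 0)) *
              gaugePhi n p q (relCorrNorm p f (x 0)) ^ 2 ^ k) :=
          mul_le_mul (gaugePhi_iterate_le h0 hf hiter k) ih hβ (by positivity)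
      _ = (1 - epow 2 q * relCorrNorm p f (x 0)) *
            gaugePhi n p q (relCorrNorm p f (x 0)) ^ 2 ^ (k + 1) := by ring

lemma norm_iterate_sub_le (h0 : IsInitialPoint p q f (x 0)) (hf : f.natDegree = n)
    (hiter : ∀ k, x (k + 1) = weierstrassMap f (x k)) (k : ℕ) (i : Fin n) :
    ‖x (k + 1) i - x k i‖ ≤
      (1 - epow 2 q * relCorrNorm p f (x 0)) ^ k *
        gaugePhi n p q (relCorrNorm p f (x 0)) ^ (2 ^ k - 1) * ‖x 1 i - x 0 i‖ := by
  have hW : ∀ k, ‖x (k + 1) i - x k i‖ = ‖Wcorr f (x k) i‖ := fun k => by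
    rw [hiter k, weierstrassMap_sub, norm_neg]
  have hθ : 0 ≤ 1 - epow 2 q * relCorrNorm p f (x 0) := sub_nonneg.2 h0.epow_mul_lt_one.le
  refine le_pow_mul_pow_mul_of_succ_le (w := fun k => ‖x (k + 1) i - x k i‖) hθ
    h0.gaugePhi_nonneg (fun k => ?_) k
  have hk := h0.iterate hf hiter k
  rw [hW, hW, hiter k]
  exact (norm_Wcorr_weierstrassMap_le hf hk.injective hk.epow_mul_lt_one i).trans
    (mul_le_mul_of_nonneg_right (gaugeBeta_iterate_le h0 hf hiter k) (norm_nonneg _))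

end Iterates

end Orbit

section Limit

variable {K : Type*} [NormedField K] {n : ℕ} {p q : ℝ≥0∞} {f : Polynomial K} {ξ : Fin n → K}

lemma isRootVector_of_tendsto {x : ℕ → Fin n → K} (hf : f.natDegree = n)
    (hinj : ∀ k, Function.Injective (x k)) (hiter : ∀ k, x (k + 1) = weierstrassMap f (x k))
    (hlim : ∀ i, Tendsto (fun k => x k i) atTop (𝓝 (ξ i))) : IsRootVector f ξ := by
  intro z
  have hW : ∀ i, Tendsto (fun k => Wcorr f (x k) i) atTop (𝓝 0) := fun i => by
    have hstep : ∀ k, x k i - x (k + 1) i = Wcorr f (x k) i := fun k => by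
      rw [hiter k]
      exact sub_sub_cancel _ _
    simpa only [hstep, sub_self] using (hlim i).sub ((tendsto_add_atTop_iff_nat 1).2 (hlim i))
  have hprod : ∀ s : Finset (Fin n),
      Tendsto (fun k => ∏ j ∈ s, (z - x k j)) atTop (𝓝 (∏ j ∈ s, (z - ξ j))) := fun s =>
    tendsto_finsetProd s fun j _ => tendsto_const_nhds.sub (hlim j)
  have hsum : Tendsto (fun k => ∑ j, Wcorr f (x k) j * ∏ l ∈ univ.erase j, (z - x k l)) atTop
      (𝓝 (∑ j, 0 * ∏ l ∈ univ.erase j, (z - ξ l))) :=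
    tendsto_finsetSum _ fun j _ => (hW j).mul (hprod _)
  have h := ((hprod univ).add hsum).const_mul f.leadingCoeff
  simp only [← eval_eq_leadingCoeff_mul_prod_add_sum hf (hinj _) z, zero_mul, sum_const_zero,
    add_zero] at h
  exact tendsto_nhds_unique tendsto_const_nhds h

lemma injective_of_norm_sub_le_div [p.HolderConjugate q] {x : Fin n → K} {b : ℝ}
    (hx : Function.Injective x) (hE : epow 2 q * relCorrNorm p f x < 1 - b) (hb : b < 1)
    (hξ : ∀ i, ‖x i - ξ i‖ ≤ ‖Wcorr f x i‖ / (1 - b)) : Function.Injective ξ := by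
  intro i j hij
  by_contra hne
  have hb' : 0 < 1 - b := sub_pos.2 hb
  have hpos : 0 < ‖x i - x j‖ := norm_pos_iff.2 (sub_ne_zero.2 (hx.ne hne))
  have hlt : ‖x i - x j‖ < ‖x i - x j‖ :=
    calc ‖x i - x j‖ = ‖(x i - ξ i) - (x j - ξ j)‖ := by rw [hij, sub_sub_sub_cancel_right]
      _ ≤ ‖x i - ξ i‖ + ‖x j - ξ j‖ := norm_sub_le _ _
      _ ≤ ‖Wcorr f x i‖ / (1 - b) + ‖Wcorr f x j‖ / (1 - b) := add_le_add (hξ i) (hξ j)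
      _ = (‖Wcorr f x i‖ + ‖Wcorr f x j‖) / (1 - b) := (add_div _ _ _).symm
      _ ≤ epow 2 q * relCorrNorm p f x * ‖x i - x j‖ / (1 - b) := by
          gcongr
          exact norm_Wcorr_add_norm_Wcorr_le hx hne
      _ < (1 - b) * ‖x i - x j‖ / (1 - b) := by gcongr
      _ = ‖x i - x j‖ := mul_div_cancel_left₀ _ hb'.ne'
  exact lt_irrefl _ hlt

end Limit

section Convergence

variable {K : Type*} [NormedField K] {n : ℕ} {p q : ℝ≥0∞} {f : Polynomial K}
  {x : ℕ → Fin n → K} {ξ : Fin n → K} [Nontrivial (Fin n)] [p.HolderConjugate q]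

lemma dist_iterate_le (h0 : IsInitialPoint p q f (x 0)) (hf : f.natDegree = n)
    (hiter : ∀ k, x (k + 1) = weierstrassMap f (x k)) (i : Fin n) (k : ℕ) :
    dist (x k i) (x (k + 1) i) ≤
      (1 - epow 2 q * relCorrNorm p f (x 0)) ^ k *
        gaugePhi n p q (relCorrNorm p f (x 0)) ^ (2 ^ k - 1) * ‖x 1 i - x 0 i‖ :=
  (dist_eq_norm' _ _).trans_le (norm_iterate_sub_le h0 hf hiter k i)

lemma norm_iterate_sub_zero_le (h0 : IsInitialPoint p q f (x 0)) (hf : f.natDegree = n)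
    (hiter : ∀ k, x (k + 1) = weierstrassMap f (x k)) (k : ℕ) (i : Fin n) :
    ‖x k i - x 0 i‖ ≤
      ‖Wcorr f (x 0) i‖ / (1 - gaugeBeta n p q (relCorrNorm p f (x 0))) := by
  have hE := h0.epow_mul_lt_one
  rw [gaugeBeta_eq_mul_gaugePhi hE, ← norm_neg (Wcorr f (x 0) i), ← weierstrassMap_sub, ← hiter 0,
    ← dist_eq_norm']
  exact dist_zero_le_div_of_dist_le (u := fun k => x k i) (sub_nonneg.2 hE.le)
    h0.gaugePhi_nonneg h0.gaugePhi_le_one h0.one_sub_mul_gaugePhi_lt_one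
    (dist_iterate_le h0 hf hiter i) k

lemma exists_tendsto_iterate [CompleteSpace K] (h0 : IsInitialPoint p q f (x 0))
    (hf : f.natDegree = n) (hiter : ∀ k, x (k + 1) = weierstrassMap f (x k)) (i : Fin n) :
    ∃ a, Tendsto (fun k => x k i) atTop (𝓝 a) := by
  have hcauchy := cauchySeq_of_le_geometric _ _ h0.one_sub_mul_gaugePhi_lt_one <|
    dist_le_geometric (sub_nonneg.2 h0.epow_mul_lt_one.le) h0.gaugePhi_nonneg h0.gaugePhi_le_one
      (dist_iterate_le h0 hf hiter i)
  exact cauchySeq_tendsto_of_complete hcauchy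

lemma norm_iterate_sub_lim_le (h0 : IsInitialPoint p q f (x 0)) (hf : f.natDegree = n)
    (hiter : ∀ k, x (k + 1) = weierstrassMap f (x k))
    (hlim : ∀ i, Tendsto (fun k => x k i) atTop (𝓝 (ξ i))) (k : ℕ) (i : Fin n) :
    ‖x k i - ξ i‖ ≤
      (1 - epow 2 q * relCorrNorm p f (x 0)) ^ k *
          gaugePhi n p q (relCorrNorm p f (x 0)) ^ (2 ^ k - 1) /
        (1 - (1 - epow 2 q * relCorrNorm p f (x 0)) *
          gaugePhi n p q (relCorrNorm p f (x 0)) ^ 2 ^ k) * ‖x 1 i - x 0 i‖ := by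
  rw [← dist_eq_norm]
  exact dist_le_div_of_tendsto (sub_nonneg.2 h0.epow_mul_lt_one.le) h0.gaugePhi_nonneg
    h0.gaugePhi_le_one h0.one_sub_mul_gaugePhi_lt_one (dist_iterate_le h0 hf hiter i) (hlim i) k

lemma injective_lim_iterate (h0 : IsInitialPoint p q f (x 0)) (hf : f.natDegree = n)
    (hiter : ∀ k, x (k + 1) = weierstrassMap f (x k))
    (hlim : ∀ i, Tendsto (fun k => x k i) atTop (𝓝 (ξ i)))
    (hφ : gaugePhi n p q (relCorrNorm p f (x 0)) < 1) : Function.Injective ξ := by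
  have hE := h0.epow_mul_lt_one
  have hEβ : epow 2 q * relCorrNorm p f (x 0) <
      1 - gaugeBeta n p q (relCorrNorm p f (x 0)) := by
    rw [lt_sub_comm, gaugeBeta_eq_mul_gaugePhi hE]
    exact mul_lt_of_lt_one_right (sub_pos.2 hE) hφ
  refine injective_of_norm_sub_le_div h0.injective hEβ h0.gaugeBeta_lt_one fun i => ?_
  rw [norm_sub_rev]
  exact le_of_tendsto ((hlim i).sub_const _).norm
    (Eventually.of_forall fun k => norm_iterate_sub_zero_le h0 hf hiter k i)

end Convergence

/-- semilocal convergence theorem for the Weierstrass method. Under the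
initial conditions `E(x⁰) = ‖W(x⁰)/d(x⁰)‖_p < 1/2^{1/q}` and `φ(E(x⁰)) ≤ 1`:
(i) the iteration is well defined, stays in the closed ball of radius
`|W_i(x⁰)|/(1 − β(E(x⁰)))` around `x⁰_i` componentwise, and converges to a
root-vector `ξ` of `f`; (ii) a priori estimates hold with `λ = φ(E(x⁰))` and
`θ = 1 − 2^{1/q}E(x⁰)`; (iii) if `φ(E(x⁰)) < 1` then `f` has `n` simple zeros. -/
theorem weierstrass_semilocal_convergence
    {K : Type*} [NormedField K] [CompleteSpace K] {n : ℕ} (hn : 2 ≤ n)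
    (f : Polynomial K) (hdeg : f.natDegree = n)
    (p q : ℝ≥0∞) (hp : 1 ≤ p) (hpq : 1 / p + 1 / q = 1)
    (E : (Fin n → K) → ℝ)
    (hE : ∀ y : Fin n → K, E y = pnorm p (fun i => ‖Wcorr f y i‖ / dsep y i))
    (φ β : ℝ → ℝ)
    (hφ : ∀ t : ℝ, φ t = epow ((n : ℝ) - 1) q * t / ((1 - t) * (1 - epow 2 q * t)) *
      (1 + t / (epow ((n : ℝ) - 1) p * (1 - epow 2 q * t))) ^ (n - 1))
    (hβ : ∀ t : ℝ, β t = epow ((n : ℝ) - 1) q * t / (1 - t) *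
      (1 + t / (epow ((n : ℝ) - 1) p * (1 - epow 2 q * t))) ^ (n - 1))
    (x : ℕ → Fin n → K) (hx0 : Function.Injective (x 0))
    (hEx0 : E (x 0) < 1 / epow 2 q) (hφx0 : φ (E (x 0)) ≤ 1)
    (hiter : ∀ k : ℕ, x (k+1) = fun i => x k i - Wcorr f (x k) i) :
    (∀ k : ℕ, Function.Injective (x k)) ∧
    (∀ k : ℕ, ∀ i : Fin n,
      ‖x k i - x 0 i‖ ≤ ‖Wcorr f (x 0) i‖ / (1 - β (E (x 0)))) ∧
    ∃ ξ : Fin n → K, IsRootVector f ξ ∧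
      (∀ i : Fin n, Filter.Tendsto (fun k => x k i) Filter.atTop (nhds (ξ i))) ∧
      (∀ k : ℕ, ∀ i : Fin n,
        ‖x k i - ξ i‖ ≤
          (1 - epow 2 q * E (x 0)) ^ k * φ (E (x 0)) ^ (2 ^ k - 1) /
            (1 - (1 - epow 2 q * E (x 0)) * φ (E (x 0)) ^ 2 ^ k) *
          ‖x 1 i - x 0 i‖) ∧
      (∀ k : ℕ, ∀ i : Fin n,
        ‖x (k+1) i - x k i‖ ≤
          (1 - epow 2 q * E (x 0)) ^ k * φ (E (x 0)) ^ (2 ^ k - 1) *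
          ‖x 1 i - x 0 i‖) ∧
      (φ (E (x 0)) < 1 → Function.Injective ξ) := by
  have : Nontrivial (Fin n) := Fin.nontrivial_iff_two_le.2 hn
  have : p.HolderConjugate q := ENNReal.holderConjugate_iff.2 (by simpa using hpq)
  obtain rfl : E = relCorrNorm p f := funext hE
  obtain rfl : β = gaugeBeta n p q := funext hβ
  obtain rfl : φ = gaugePhi n p q := funext fun t => by
    rw [hφ, ← div_div, div_mul_eq_mul_div, gaugePhi, gaugeBeta]
  have hc : 0 < epow 2 q := zero_lt_one.trans_le (one_le_epow one_le_two q)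
  have h0 : IsInitialPoint p q f (x 0) := ⟨hx0, (lt_div_iff₀' hc).1 hEx0, hφx0⟩
  have hinj := fun k => (h0.iterate hdeg hiter k).injective
  choose ξ hξ using exists_tendsto_iterate h0 hdeg hiter
  exact ⟨hinj, norm_iterate_sub_zero_le h0 hdeg hiter, ξ,
    isRootVector_of_tendsto hdeg hinj hiter hξ, hξ, norm_iterate_sub_lim_le h0 hdeg hiter hξ,
    norm_iterate_sub_le h0 hdeg hiter, injective_lim_iterate h0 hdeg hiter hξ⟩
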